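/- The following are equivalent: (i) M_F is second countable; (ii) M_F is separable and μ is hemifinite; (iii) M_F is Lindelöf and μ is hemifinite; (iv) M_F satisfies the countable chain condition (every pairwise disjoint family of nonempty open subsets of M_F is countable) and μ is hemifinite. -/

import Mathlib

open MeasureTheory Topology Set Pointwise

/-- The set of all real-valued measurable functions on `X`, as a subtype. -/
abbrev Mble (X : Type*) [MeasurableSpace X] : Type _ := {f : X → ℝ // Measurable f}

/-- The basic set `B(f, A, ε)`: all `g` such that for some measurable null set `N`,
`sup_{x ∈ A \ N} |f x - g x| < ε`. -/
def FBall {X : Type*} [MeasurableSpace X] (μ : Measure X) (f : Mble X) (A : Set X)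
    (ε : ℝ) : Set (Mble X) :=
  {g | ∃ N : Set X, MeasurableSet N ∧ μ N = 0 ∧
        ∃ b : ℝ, b < ε ∧ ∀ x ∈ A \ N, |f.1 x - g.1 x| ≤ b}

/-- The `F_μ`-topology on `Mble X`, generated by the sets `B(f, A, ε)` with
`A` measurable of finite measure and `ε > 0`. -/
def FTop {X : Type*} [MeasurableSpace X] (μ : Measure X) : TopologicalSpace (Mble X) :=
  TopologicalSpace.generateFrom
    {S | ∃ (f : Mble X) (A : Set X) (ε : ℝ),
        MeasurableSet A ∧ μ A < ⊤ ∧ 0 < ε ∧ S = FBall μ f A ε}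

/-- A `μ`-atom: a measurable set of positive measure admitting no decomposition into two
disjoint measurable pieces of positive measure. -/
def MuAtom {X : Type*} [MeasurableSpace X] (μ : Measure X) (A : Set X) : Prop :=
  MeasurableSet A ∧ 0 < μ A ∧
    ¬ ∃ B C : Set X, MeasurableSet B ∧ MeasurableSet C ∧ Disjoint B C ∧
        B ∪ C = A ∧ 0 < μ B ∧ 0 < μ C

/-- `G` is a union of finitely many `μ`-atoms. -/
def FinAtomUnion {X : Type*} [MeasurableSpace X] (μ : Measure X) (G : Set X) : Prop :=
  ∃ (n : ℕ) (F : Fin n → Set X), (∀ i, MuAtom μ (F i)) ∧ G = ⋃ i, F i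

/-- `L^∞_G`: the measurable functions that are essentially bounded on `G`. -/
def Linf {X : Type*} [MeasurableSpace X] (μ : Measure X) (G : Set X) : Set (Mble X) :=
  {f | ∃ M₀ : ℝ, 0 < M₀ ∧ ∃ N : Set X, MeasurableSet N ∧ μ N = 0 ∧
        ∀ x ∈ G \ N, |f.1 x| ≤ M₀}

/-- The intersection `⋂_{G ∈ 𝒜_>} L^∞_G`. -/
def InterLinf {X : Type*} [MeasurableSpace X] (μ : Measure X) : Set (Mble X) :=
  ⋂ G ∈ {A : Set X | MeasurableSet A ∧ 0 < μ A ∧ μ A < ⊤}, Linf μ G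

/-- The zero function as an element of `Mble X`. -/
def zeroM {X : Type*} [MeasurableSpace X] : Mble X := ⟨fun _ => 0, measurable_const⟩

/-- `μ` is hemifinite: some sequence in `𝒜_>` almost contains every member of `𝒜_>`. -/
def Hemifinite {X : Type*} [MeasurableSpace X] (μ : Measure X) : Prop :=
  ∃ A : ℕ → Set X, (∀ n, MeasurableSet (A n) ∧ 0 < μ (A n) ∧ μ (A n) < ⊤) ∧
    ∀ F : Set X, MeasurableSet F → 0 < μ F → μ F < ⊤ → ∃ n, μ (F \ A n) = 0

/-- `G⁺`: functions strictly positive μ-almost everywhere on `G`. -/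
def Gplus {X : Type*} [MeasurableSpace X] (μ : Measure X) (G : Set X) : Set (Mble X) :=
  {f | ∃ N : Set X, MeasurableSet N ∧ μ N = 0 ∧ ∀ x ∈ G \ N, 0 < f.1 x}

/-- `G⁰`: functions nonnegative μ-almost everywhere on `G`. -/
def Gzero {X : Type*} [MeasurableSpace X] (μ : Measure X) (G : Set X) : Set (Mble X) :=
  {f | ∃ N : Set X, MeasurableSet N ∧ μ N = 0 ∧ ∀ x ∈ G \ N, 0 ≤ f.1 x}

instance {X : Type*} [MeasurableSpace X] : Add (Mble X) :=
  ⟨fun f g => ⟨f.1 + g.1, f.2.add g.2⟩⟩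

/-!
The `F_μ`-topology is the infimum, over the measurable sets `A` of finite measure, of the topologies
of essentially uniform convergence on `A`, each of which comes from an extended pseudometric. A
sequence witnessing that `μ` is hemifinite is cofinal among the sets `A`, so it reduces this infimum
to a countable one and makes `M_F` pseudometrizable. In a pseudometrizable space, separability, the
Lindelöf property and the countable chain condition are all equivalent to second countability: for
the chain condition, the balls of radius `ε / 2` around a maximal `ε`-separated set are pairwise
disjoint, so this set is a countable `ε`-net.

Conversely, `B(f, A, ε) ⊆ B(f, F, δ)` forces `μ (F ∖ A) = 0`, as one sees by adding `δ` to `f` on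
`F ∖ A`. Hence the sets `A` in a countable neighbourhood base at one function, each enlarged by a
fixed set of positive finite measure, witness that `μ` is hemifinite.
-/

section Topology

open TopologicalSpace
open scoped ENNReal Uniformity

variable {α : Type*}

/-- The countable chain condition: every family of pairwise disjoint nonempty open sets is
countable. -/
def CountableChainCondition (α : Type*) [TopologicalSpace α] : Prop :=
  ∀ 𝒰 : Set (Set α), (∀ U ∈ 𝒰, IsOpen U ∧ U.Nonempty) → 𝒰.Pairwise Disjoint → 𝒰.Countable

theorem countableChainCondition_of_separableSpace [TopologicalSpace α]
    [SeparableSpace α] : CountableChainCondition α := fun _ hU hdisj =>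
  Set.PairwiseDisjoint.countable_of_isOpen (s := id) hdisj
    (fun U hmem => (hU U hmem).1) fun U hmem => (hU U hmem).2

theorem CountableChainCondition.countable_of_isSeparated [PseudoEMetricSpace α]
    (hccc : CountableChainCondition α) {ε : ℝ≥0∞} (hε : 0 < ε) {s : Set α}
    (hs : Metric.IsSeparated ε s) : s.Countable := by
  have hpos : 0 < ε / 2 := ENNReal.half_pos hε.ne'
  have hdisj : s.PairwiseDisjoint fun x => Metric.eball x (ε / 2) := fun x hx y hy hxy =>
    Metric.eball_disjoint ((ENNReal.add_halves ε).trans_le (hs hx hy hxy).le)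
  have hinj : s.InjOn fun x => Metric.eball x (ε / 2) :=
    fun x hx y hy hxy => hdisj.elim_set hx hy x (Metric.mem_eball_self hpos)
      (hxy.subset (Metric.mem_eball_self hpos))
  refine countable_of_injective_of_countable_image hinj (hccc _ ?_ ?_)
  · rintro _ ⟨x, -, rfl⟩
    exact ⟨Metric.isOpen_eball, x, Metric.mem_eball_self hpos⟩
  · exact hinj.pairwise_image.2 hdisj

theorem exists_maximal_isSeparated [PseudoEMetricSpace α] (ε : ℝ≥0∞) (s : Set α) :
    ∃ t, Maximal (fun t => t ⊆ s ∧ Metric.IsSeparated ε t) t :=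
  zorn_subset {t | t ⊆ s ∧ Metric.IsSeparated ε t} fun c hc hchain =>
    ⟨⋃₀ c, ⟨sUnion_subset fun _ ht => (hc ht).1,
      (pairwise_sUnion hchain.directedOn).2 fun _ ht => (hc ht).2⟩,
      fun _ => subset_sUnion_of_mem⟩

theorem CountableChainCondition.secondCountableTopology [TopologicalSpace α]
    [PseudoMetrizableSpace α] (hccc : CountableChainCondition α) :
    SecondCountableTopology α := by
  let := pseudoMetrizableSpacePseudoMetric α
  refine EMetric.secondCountable_of_almost_dense_set fun ε hε => ?_
  obtain ⟨δ, hδ, hδε⟩ := ENNReal.lt_iff_exists_nnreal_btwn.1 hε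
  obtain ⟨t, ht⟩ := exists_maximal_isSeparated (δ : ℝ≥0∞) (univ : Set α)
  have hcover : univ ⊆ ⋃ x ∈ t, Metric.closedEBall x δ :=
    Metric.isCover_iff_subset_iUnion_closedEBall.1 (.of_maximal_isSeparated ht)
  exact ⟨t, hccc.countable_of_isSeparated hδ ht.prop.2, univ_subset_iff.1 <|
    hcover.trans <| iUnion₂_mono fun x _ => Metric.closedEBall_subset_closedEBall hδε.le⟩

theorem secondCountableTopology_iff_countableChainCondition [TopologicalSpace α]
    [PseudoMetrizableSpace α] :
    SecondCountableTopology α ↔ CountableChainCondition α :=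
  ⟨fun _ => countableChainCondition_of_separableSpace, fun h => h.secondCountableTopology⟩

theorem secondCountableTopology_iff_separableSpace [TopologicalSpace α]
    [PseudoMetrizableSpace α] :
    SecondCountableTopology α ↔ SeparableSpace α :=
  ⟨fun _ => inferInstance, fun _ =>
    countableChainCondition_of_separableSpace.secondCountableTopology⟩

theorem secondCountableTopology_iff_lindelofSpace [TopologicalSpace α]
    [PseudoMetrizableSpace α] :
    SecondCountableTopology α ↔ LindelofSpace α :=
  ⟨fun _ => inferInstance, fun _ => inferInstance⟩

theorem pseudoMetrizableSpace_iInf {ι : Type*} [Countable ι] {t : ι → TopologicalSpace α}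
    (ht : ∀ i, @PseudoMetrizableSpace α (t i)) :
    @PseudoMetrizableSpace α (⨅ i, t i) := by
  let u (i : ι) : UniformSpace α := @pseudoMetrizableSpaceUniformity α (t i) (ht i)
  have hu (i : ι) : (𝓤[u i]).IsCountablyGenerated :=
    @pseudoMetrizableSpaceUniformity_countably_generated α (t i) (ht i)
  have hinf : (𝓤[⨅ i, u i]).IsCountablyGenerated := by
    rw [iInf_uniformity]
    infer_instance
  have htop : (⨅ i, u i).toTopologicalSpace = ⨅ i, t i := UniformSpace.toTopologicalSpace_iInf
  exact htop ▸ @UniformSpace.pseudoMetrizableSpace α (⨅ i, u i) hinf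

theorem nhds_basis_eball_ofReal [PseudoEMetricSpace α] (x : α) :
    (𝓝 x).HasBasis (fun ε : ℝ => 0 < ε) fun ε => Metric.eball x (ENNReal.ofReal ε) := by
  refine Metric.nhds_basis_eball.to_hasBasis (fun ε hε => ?_)
    fun ε hε => ⟨ENNReal.ofReal ε, ENNReal.ofReal_pos.2 hε, Subset.rfl⟩
  obtain ⟨r, -, hr, hrε⟩ := ENNReal.lt_iff_exists_real_btwn.1 hε
  exact ⟨r, ENNReal.ofReal_pos.1 hr, Metric.eball_subset_eball hrε.le⟩

theorem generateFrom_eball_ofReal [PseudoEMetricSpace α] :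
    generateFrom
      {s : Set α | ∃ (x : α) (ε : ℝ), 0 < ε ∧ s = Metric.eball x (ENNReal.ofReal ε)} =
      UniformSpace.toTopologicalSpace := by
  refine (isTopologicalBasis_of_isOpen_of_nhds ?_ ?_).eq_generateFrom.symm
  · rintro _ ⟨x, ε, -, rfl⟩
    exact Metric.isOpen_eball
  · intro x s hx hs
    obtain ⟨ε, hε, hsub⟩ := (nhds_basis_eball_ofReal x).mem_iff.1 (hs.mem_nhds hx)
    exact ⟨_, ⟨x, ε, hε, rfl⟩, Metric.mem_eball_self (ENNReal.ofReal_pos.2 hε), hsub⟩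

end Topology

section EssentialSupremum

variable {X : Type*} [MeasurableSpace X]

theorem mem_FBall_iff {μ : Measure X} {f g : Mble X} {A : Set X} {ε : ℝ} :
    g ∈ FBall μ f A ε ↔ ∃ b < ε, ∀ᵐ x ∂μ, x ∈ A → |f.1 x - g.1 x| ≤ b := by
  constructor
  · rintro ⟨N, -, hN, b, hb, hbound⟩
    refine ⟨b, hb, ?_⟩
    filter_upwards [measure_eq_zero_iff_ae_notMem.1 hN] with x hxN hxA using hbound x ⟨hxA, hxN⟩
  · rintro ⟨b, hb, hbound⟩
    obtain ⟨N, hsub, hN, hN0⟩ := exists_measurable_superset_of_null (ae_iff.1 hbound)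
    refine ⟨N, hN, hN0, b, hb, fun x hx => ?_⟩
    exact not_not.1 (notMem_subset hsub hx.2) hx.1

/-- The extended pseudometric `‖f - g‖_∞` of essentially uniform convergence with respect to `ν`,
which is `∞` when `f - g` is not essentially bounded. It is not an instance because `Mble X` already
inherits the topology of pointwise convergence as a subtype of `X → ℝ`. -/
@[reducible]
noncomputable def essSupPseudoEMetricSpace (ν : Measure X) : PseudoEMetricSpace (Mble X) where
  edist f g := eLpNormEssSup (f.1 - g.1) ν
  edist_self f := by simp only [sub_self, eLpNormEssSup_zero]
  edist_comm f g := by simpa only [eLpNorm_exponent_top] using eLpNorm_sub_comm f.1 g.1 ⊤ ν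
  edist_triangle f g h := by
    simpa only [sub_add_sub_cancel] using eLpNormEssSup_add_le (f := f.1 - g.1) (g := g.1 - h.1)

theorem FBall_eq_eball {μ : Measure X} {A : Set X} (hA : MeasurableSet A) (f : Mble X) {ε : ℝ}
    (hε : 0 < ε) :
    FBall μ f A ε =
      letI := essSupPseudoEMetricSpace (μ.restrict A)
      Metric.eball f (ENNReal.ofReal ε) := by
  ext g
  let := essSupPseudoEMetricSpace (μ.restrict A)
  rw [mem_FBall_iff, Metric.mem_eball']
  constructor
  · rintro ⟨b, hb, hbound⟩
    exact (eLpNormEssSup_le_of_ae_bound ((ae_restrict_iff' hA).2 hbound)).trans_lt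
      ((ENNReal.ofReal_lt_ofReal_iff hε).2 hb)
  · intro hdist
    have hfinite : edist f g ≠ ⊤ := ne_top_of_lt hdist
    refine ⟨(edist f g).toReal, ENNReal.toReal_lt_of_lt_ofReal hdist, ?_⟩
    have hle : ∀ᵐ x ∂μ.restrict A, ‖(f.1 - g.1) x‖ₑ ≤ edist f g := ae_le_eLpNormEssSup
    filter_upwards [(ae_restrict_iff' hA).1 hle] with x hx hxA
    simpa only [Pi.sub_apply, toReal_enorm, Real.norm_eq_abs]
      using ENNReal.toReal_mono hfinite (hx hxA)

/-- The topology of essentially uniform convergence with respect to `ν`. -/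
noncomputable abbrev essSupTopology (ν : Measure X) : TopologicalSpace (Mble X) :=
  (essSupPseudoEMetricSpace ν).toUniformSpace.toTopologicalSpace

theorem essSupTopology_anti {ν ν' : Measure X} (h : ν ≪ ν') :
    essSupTopology ν' ≤ essSupTopology ν := by
  have hlip : @LipschitzWith _ _ (essSupPseudoEMetricSpace ν') (essSupPseudoEMetricSpace ν) 1 id :=
    @LipschitzWith.of_edist_le _ _ (essSupPseudoEMetricSpace ν') (essSupPseudoEMetricSpace ν) _
      fun f g => eLpNormEssSup_mono_measure (f.1 - g.1) h
  exact continuous_id_iff_le.1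
    (@LipschitzWith.continuous _ _ (essSupPseudoEMetricSpace ν') (essSupPseudoEMetricSpace ν)
      _ _ hlip)

end EssentialSupremum

section FTop

variable {X : Type*} [MeasurableSpace X] {μ : Measure X}

theorem FTop_eq_iInf_essSupTopology (μ : Measure X) :
    FTop μ = ⨅ A : {A : Set X // MeasurableSet A ∧ μ A < ⊤}, essSupTopology (μ.restrict A) := by
  have hgen (A : {A : Set X // MeasurableSet A ∧ μ A < ⊤}) :
      essSupTopology (μ.restrict A) = TopologicalSpace.generateFrom
        {S | ∃ (f : Mble X) (ε : ℝ), 0 < ε ∧ S = FBall μ f A ε} := by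
    rw [essSupTopology, ← @generateFrom_eball_ofReal _ (essSupPseudoEMetricSpace (μ.restrict A))]
    congr 1
    ext S
    exact exists₂_congr fun f ε => and_congr_right fun hε => by rw [FBall_eq_eball A.2.1 f hε]
  simp_rw [hgen, ← generateFrom_iUnion, FTop]
  congr 1
  ext S
  simp only [mem_ofPred_eq, mem_iUnion, Subtype.exists]
  grind

theorem hasBasis_nhds_FTop (μ : Measure X) (f : Mble X) :
    (@nhds _ (FTop μ) f).HasBasis
      (fun p : {A : Set X // MeasurableSet A ∧ μ A < ⊤} × ℝ => 0 < p.2)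
      fun p => FBall μ f p.1 p.2 := by
  have : Nonempty {A : Set X // MeasurableSet A ∧ μ A < ⊤} := ⟨∅, .empty, by simp⟩
  rw [FTop_eq_iInf_essSupTopology, nhds_iInf]
  refine Filter.hasBasis_iInf_of_directed
    (fun (A : {A : Set X // MeasurableSet A ∧ μ A < ⊤}) ε => FBall μ f A ε) (fun _ ε => 0 < ε)
    (fun A => ?_) ?_
  · exact (@nhds_basis_eball_ofReal _ (essSupPseudoEMetricSpace (μ.restrict A)) f).congr
      (fun _ => Iff.rfl) fun ε hε => (FBall_eq_eball A.2.1 f hε).symm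
  · have hmono {A B : Set X} (h : A ⊆ B) :
        @nhds _ (essSupTopology (μ.restrict B)) f ≤ @nhds _ (essSupTopology (μ.restrict A)) f :=
      nhds_mono (essSupTopology_anti (Measure.restrict_mono_set μ h).absolutelyContinuous)
    exact fun A B => ⟨⟨A ∪ B, A.2.1.union B.2.1, measure_union_lt_top A.2.2 B.2.2⟩,
      hmono subset_union_left, hmono subset_union_right⟩

theorem pseudoMetrizableSpace_FTop (hemi : Hemifinite μ) :
    @TopologicalSpace.PseudoMetrizableSpace (Mble X) (FTop μ) := by
  obtain ⟨A, hA, hcofinal⟩ := hemi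
  have hnull (F : {F : Set X // MeasurableSet F ∧ μ F < ⊤}) : ∃ n, μ (F \ A n) = 0 := by
    rcases eq_zero_or_pos (μ F) with hF | hF
    · exact ⟨0, measure_mono_null sdiff_subset hF⟩
    · exact hcofinal F F.2.1 hF F.2.2
  have hcountable : FTop μ = ⨅ n, essSupTopology (μ.restrict (A n)) := by
    rw [FTop_eq_iInf_essSupTopology]
    refine le_antisymm (le_iInf fun n => iInf_le_of_le ⟨A n, (hA n).1, (hA n).2.2⟩ le_rfl)
      (le_iInf fun F => ?_)
    obtain ⟨n, hn⟩ := hnull F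
    exact iInf_le_of_le n (essSupTopology_anti
      (Measure.restrict_mono_ae (ae_le_set.2 hn)).absolutelyContinuous)
  rw [hcountable]
  exact pseudoMetrizableSpace_iInf fun n =>
    @PseudoEMetricSpace.pseudoMetrizableSpace _ (essSupPseudoEMetricSpace (μ.restrict (A n)))

theorem measure_sdiff_eq_zero_of_FBall_subset {f : Mble X} {A F : Set X} {ε δ : ℝ}
    (hA : MeasurableSet A) (hF : MeasurableSet F) (hε : 0 < ε)
    (h : FBall μ f A ε ⊆ FBall μ f F δ) : μ (F \ A) = 0 := by
  let g : Mble X := ⟨f.1 + (F \ A).indicator fun _ => δ,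
    f.2.add (measurable_const.indicator (hF.diff hA))⟩
  have hg : g ∈ FBall μ f A ε := mem_FBall_iff.2 ⟨0, hε, .of_forall fun x hx => by
    simp [g, hx]⟩
  obtain ⟨b, hb, hbound⟩ := mem_FBall_iff.1 (h hg)
  rw [measure_eq_zero_iff_ae_notMem]
  filter_upwards [hbound] with x hx hxFA
  have hδ : |δ| ≤ b := by
    simpa [g, hxFA.1, hxFA.2] using hx hxFA.1
  linarith [le_abs_self δ]

theorem hemifinite_of_firstCountableTopology
    (hfin : ∃ C, MeasurableSet C ∧ 0 < μ C ∧ μ C < ⊤)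
    (h : @FirstCountableTopology (Mble X) (FTop μ)) : Hemifinite μ := by
  let := FTop μ
  obtain ⟨C, hC, hC0, hC1⟩ := hfin
  obtain ⟨p, hp, hbasis⟩ := (hasBasis_nhds_FTop μ zeroM).exists_antitone_subbasis
  refine ⟨fun n => (p n).1 ∪ C, fun n => ⟨(p n).1.2.1.union hC,
    hC0.trans_le (measure_mono subset_union_right), measure_union_lt_top (p n).1.2.2 hC1⟩, ?_⟩
  intro F hF _ hF1
  have hmem : FBall μ zeroM F 1 ∈ 𝓝 zeroM :=
    (hasBasis_nhds_FTop μ zeroM).mem_of_mem (i := (⟨F, hF, hF1⟩, 1)) one_pos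
  obtain ⟨n, hn⟩ := hbasis.mem_iff.1 hmem
  exact ⟨n, measure_mono_null (sdiff_subset_sdiff_right subset_union_left)
    (measure_sdiff_eq_zero_of_FBall_subset (p n).1.2.1 hF (hp n) hn)⟩

theorem exists_measurableSet_measure_pos_lt_top (hpos : 0 < μ univ)
    (hsub : ∀ A : Set X, MeasurableSet A → μ A = ⊤ →
      ∃ B, B ⊆ A ∧ MeasurableSet B ∧ 0 < μ B ∧ μ B < ⊤) :
    ∃ C, MeasurableSet C ∧ 0 < μ C ∧ μ C < ⊤ := by
  rcases eq_or_ne (μ univ) ⊤ with htop | hfin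
  · obtain ⟨B, -, hB⟩ := hsub univ .univ htop
    exact ⟨B, hB⟩
  · exact ⟨univ, .univ, hpos, hfin.lt_top⟩

theorem stmt18_general (hfin : ∃ C, MeasurableSet C ∧ 0 < μ C ∧ μ C < ⊤) :
    (@SecondCountableTopology (Mble X) (FTop μ) ↔
      (@TopologicalSpace.SeparableSpace (Mble X) (FTop μ) ∧ Hemifinite μ)) ∧
    (@SecondCountableTopology (Mble X) (FTop μ) ↔
      (@LindelofSpace (Mble X) (FTop μ) ∧ Hemifinite μ)) ∧
    (@SecondCountableTopology (Mble X) (FTop μ) ↔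
      (@CountableChainCondition (Mble X) (FTop μ) ∧ Hemifinite μ)) := by
  let := FTop μ
  have hemi (_ : SecondCountableTopology (Mble X)) : Hemifinite μ :=
    hemifinite_of_firstCountableTopology hfin inferInstance
  have iff_and_hemifinite {P : Prop}
      (h : TopologicalSpace.PseudoMetrizableSpace (Mble X) →
        (SecondCountableTopology (Mble X) ↔ P)) :
      SecondCountableTopology (Mble X) ↔ P ∧ Hemifinite μ :=
    (and_iff_left_of_imp hemi).symm.trans <|
      and_congr_left fun hμ => h (pseudoMetrizableSpace_FTop hμ)
  exact ⟨iff_and_hemifinite fun _ => secondCountableTopology_iff_separableSpace,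
    iff_and_hemifinite fun _ => secondCountableTopology_iff_lindelofSpace,
    iff_and_hemifinite fun _ => secondCountableTopology_iff_countableChainCondition⟩

end FTop

/-- `M_F` is second countable iff it is separable and `μ` is hemifinite,
iff it is Lindelöf and `μ` is hemifinite, iff it satisfies the countable chain condition
and `μ` is hemifinite. -/
theorem stmt18 {X : Type*} [MeasurableSpace X] (μ : Measure X)
    (hpos : 0 < μ Set.univ)
    (hsub : ∀ A : Set X, MeasurableSet A → μ A = ⊤ →
      ∃ B, B ⊆ A ∧ MeasurableSet B ∧ 0 < μ B ∧ μ B < ⊤) :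
    (@SecondCountableTopology (Mble X) (FTop μ) ↔
      (@TopologicalSpace.SeparableSpace (Mble X) (FTop μ) ∧ Hemifinite μ)) ∧
    (@SecondCountableTopology (Mble X) (FTop μ) ↔
      (@LindelofSpace (Mble X) (FTop μ) ∧ Hemifinite μ)) ∧
    (@SecondCountableTopology (Mble X) (FTop μ) ↔
      ((∀ 𝒰 : Set (Set (Mble X)), (∀ U ∈ 𝒰, IsOpen[FTop μ] U ∧ U.Nonempty) →
          𝒰.Pairwise Disjoint → 𝒰.Countable) ∧ Hemifinite μ)) := by
  exact stmt18_general (exists_measurableSet_measure_pos_lt_top hpos hsub)
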